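/- Let d ≥ 1, let f : ℝ^d → ℝ be twice continuously differentiable with L-Lipschitz gradient ∇f, fix x ∈ ℝ^d, let (μ_n)_{n≥1} be a positive decreasing sequence with ∑_{n=1}^∞ μ_n < ∞, let (p_n)_{n≥1} be a PMF, and let σ_d be the uniform probability measure on the sphere {v ∈ ℝ^d : ‖v‖ = √d}. Writing Δ_n(v) := (f(x + μ_n·v) − f(x))/μ_n, P₄(n, v) := Δ_1(v) + (1/p_n)(Δ_{n+1}(v) − Δ_n(v)), μ := μ_1, and ϱ := ∑_{n=1}^∞ (μ_n − μ_{n+1})²/p_n, the variance of the P₄-estimator of ∇f(x) satisfies, with all sums and integrals taken in [0, ∞]: ∑_{n=1}^∞ p_n · ∫ ‖P₄(n, v)·v − ∇f(x)‖² dσ_d(v) ≤ (d − 1)·‖∇f(x)‖² + (3L²/4)·d³·μ² + (L²·d³/2)·ϱ. -/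

import Mathlib

open MeasureTheory
open scoped ENNReal RealInnerProductSpace

/-!
Conditionally on the direction `v`, the vectors `Δ n v • v` converge to `⟪∇f x, v⟫ • v`, and
`P₄ n v • v` draws one increment of this sequence at random, reweighted so as to be unbiased for the
limit. The mean squared error about `∇f x` is therefore at most the error
`‖⟪∇f x, v⟫ • v - ∇f x‖²` of the limit plus the sum of the squared increments divided by their
probabilities. The first term integrates to `(d - 1) ‖∇f x‖²` because the sphere is isotropic; the
second is at most `L² d³ ϱ / 4` because `t ↦ (f (x + t • v) - f x) / t` is Lipschitz with constant
`L ‖v‖² / 2`.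
-/

open Filter Topology
open scoped NNReal Gradient

section DifferenceQuotient

theorem dslope_eq_integral_deriv {F : Type*} [NormedAddCommGroup F] [NormedSpace ℝ F]
    [CompleteSpace F] {φ : ℝ → F} (hφ : Differentiable ℝ φ) (hφ' : Continuous (deriv φ)) (a t : ℝ) :
    dslope φ a t = ∫ u in (0 : ℝ)..1, deriv φ (a + u * (t - a)) := by
  rcases eq_or_ne t a with rfl | hta
  · simp
  · have h_ftc : (t - a) • ∫ u in (0 : ℝ)..1, deriv φ (a + u • (t - a)) = φ (a + (t - a)) - φ a :=
      intervalIntegral.integral_unitInterval_deriv_eq_sub (by fun_prop)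
        fun u _ ↦ (hφ _).hasDerivAt
    rw [dslope_of_ne _ hta, slope_def_module, ← add_sub_cancel a t, ← h_ftc, add_sub_cancel,
      inv_smul_smul₀ (sub_ne_zero.2 hta)]
    simp only [smul_eq_mul]

theorem lipschitzWith_dslope {F : Type*} [NormedAddCommGroup F] [NormedSpace ℝ F]
    [CompleteSpace F] {φ : ℝ → F} {K : ℝ≥0} (hφ : Differentiable ℝ φ)
    (hK : LipschitzWith K (deriv φ)) (a : ℝ) : LipschitzWith (K / 2) (dslope φ a) := by
  have hφ' : Continuous (deriv φ) := hK.continuous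
  refine LipschitzWith.of_dist_le_mul fun s t ↦ ?_
  have h_pointwise : ∀ u ∈ Set.Ioc (0 : ℝ) 1,
      ‖deriv φ (a + u * (s - a)) - deriv φ (a + u * (t - a))‖ ≤ K * |s - t| * u := by
    intro u hu
    calc ‖deriv φ (a + u * (s - a)) - deriv φ (a + u * (t - a))‖
        ≤ K * ‖(a + u * (s - a)) - (a + u * (t - a))‖ := hK.norm_sub_le _ _
      _ = K * |s - t| * u := by
        rw [show (a + u * (s - a)) - (a + u * (t - a)) = u * (s - t) by ring, Real.norm_eq_abs,
          abs_mul, abs_of_pos hu.1]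
        ring
  calc dist (dslope φ a s) (dslope φ a t)
      = ‖∫ u in (0 : ℝ)..1, (deriv φ (a + u * (s - a)) - deriv φ (a + u * (t - a)))‖ := by
        rw [dist_eq_norm, dslope_eq_integral_deriv hφ hφ', dslope_eq_integral_deriv hφ hφ',
          intervalIntegral.integral_sub (Continuous.intervalIntegrable (by fun_prop) _ _)
            (Continuous.intervalIntegrable (by fun_prop) _ _)]
    _ ≤ ∫ u in (0 : ℝ)..1, K * |s - t| * u :=
        intervalIntegral.norm_integral_le_of_norm_le zero_le_one (.of_forall h_pointwise)
          (Continuous.intervalIntegrable (by fun_prop) _ _)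
    _ = (K / 2 : ℝ≥0) * dist s t := by
        rw [intervalIntegral.integral_const_mul, integral_id, Real.dist_eq]
        push_cast
        ring

variable {E : Type*} [NormedAddCommGroup E] [InnerProductSpace ℝ E]

/-- The forward difference quotient of `f` at `x` in the direction `v` with step `t`; it is `0` for
the junk step `t = 0`. -/
noncomputable def diffQuotient (f : E → ℝ) (x : E) (t : ℝ) (v : E) : ℝ :=
  (f (x + t • v) - f x) / t

theorem continuous_diffQuotient {f : E → ℝ} (hf : Continuous f) (x : E) (t : ℝ) :
    Continuous (diffQuotient f x t) := by
  unfold diffQuotient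
  fun_prop

theorem diffQuotient_eq_dslope (f : E → ℝ) (x v : E) {t : ℝ} (ht : t ≠ 0) :
    diffQuotient f x t v = dslope (fun s : ℝ ↦ f (x + s • v)) 0 t := by
  simp [diffQuotient, dslope_of_ne _ ht, slope_def_field]

variable [CompleteSpace E] {f : E → ℝ}

theorem hasDerivAt_comp_add_smul (hf : Differentiable ℝ f) (x v : E) (t : ℝ) :
    HasDerivAt (fun s : ℝ ↦ f (x + s • v)) ⟪∇ f (x + t • v), v⟫ t := by
  have h_line : HasDerivAt (fun s : ℝ ↦ x + s • v) v t := by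
    simpa using ((hasDerivAt_id t).smul_const v).const_add x
  exact (hf (x + t • v)).hasGradientAt.hasFDerivAt.comp_hasDerivAt t h_line

theorem tendsto_diffQuotient (hf : Differentiable ℝ f) (x v : E) :
    Tendsto (diffQuotient f x · v) (𝓝[≠] 0) (𝓝 ⟪∇ f x, v⟫) := by
  simpa [diffQuotient, slope_fun_def_field] using
    (hasDerivAt_comp_add_smul hf x v 0).tendsto_slope

theorem abs_diffQuotient_sub_le {L : ℝ≥0} (hf : Differentiable ℝ f) (hL : LipschitzWith L (∇ f))
    (x v : E) {s t : ℝ} (hs : s ≠ 0) (ht : t ≠ 0) :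
    |diffQuotient f x s v - diffQuotient f x t v| ≤ L * ‖v‖ ^ 2 / 2 * |s - t| := by
  have h_deriv : LipschitzWith (L * ‖v‖₊ ^ 2) (deriv fun r : ℝ ↦ f (x + r • v)) := by
    refine LipschitzWith.of_dist_le_mul fun r q ↦ ?_
    rw [(hasDerivAt_comp_add_smul hf x v r).deriv, (hasDerivAt_comp_add_smul hf x v q).deriv,
      Real.dist_eq, ← inner_sub_left]
    calc |⟪∇ f (x + r • v) - ∇ f (x + q • v), v⟫|
        ≤ ‖∇ f (x + r • v) - ∇ f (x + q • v)‖ * ‖v‖ := abs_real_inner_le_norm _ _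
      _ ≤ L * ‖(x + r • v) - (x + q • v)‖ * ‖v‖ := by gcongr; exact hL.norm_sub_le _ _
      _ = ↑(L * ‖v‖₊ ^ 2) * dist r q := by
        rw [add_sub_add_left_eq_sub, ← sub_smul, norm_smul, dist_eq_norm]
        push_cast
        ring
  have h_diff : Differentiable ℝ fun r : ℝ ↦ f (x + r • v) :=
    fun r ↦ (hasDerivAt_comp_add_smul hf x v r).differentiableAt
  simpa [diffQuotient_eq_dslope f x v hs, diffQuotient_eq_dslope f x v ht, Real.dist_eq] using
    (lipschitzWith_dslope h_diff h_deriv 0).dist_le_mul s t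

end DifferenceQuotient

section SingleTermEstimator

theorem hasSum_of_tsum_eq {ι : Type*} {p : ι → ℝ} {c : ℝ} (hc : c ≠ 0) (hp : ∑' i, p i = c) :
    HasSum p c := by
  have hp_summable : Summable p := by
    by_contra h_div
    exact hc (hp ▸ tsum_eq_zero_of_not_summable h_div)
  exact hp ▸ hp_summable.hasSum

/-- The single-term randomized telescoping estimator of `lim a`: a random index `n` is drawn with
probability `p n`, and the increment `a (n + 1) - a n` is reweighted by `1 / p n`. -/
noncomputable def singleTermEstimator {E : Type*} [AddCommGroup E] [Module ℝ E] (a : ℕ → E)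
    (p : ℕ → ℝ) (n : ℕ) : E :=
  a 0 + (1 / p n) • (a (n + 1) - a n)

theorem singleTermEstimator_smul_const {E : Type*} [AddCommGroup E] [Module ℝ E] (a : ℕ → ℝ)
    (p : ℕ → ℝ) (n : ℕ) (v : E) :
    singleTermEstimator a p n • v = singleTermEstimator (fun k ↦ a k • v) p n := by
  simp only [singleTermEstimator, smul_eq_mul]
  module

variable {E : Type*} [NormedAddCommGroup E] {a : ℕ → E} {m : E} {p : ℕ → ℝ}

theorem summable_sub_of_summable_norm_sq_div [CompleteSpace E] (hp : ∀ n, 0 < p n)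
    (hp_sum : Summable p) (ha : Summable fun n ↦ ‖a (n + 1) - a n‖ ^ 2 / p n) :
    Summable fun n ↦ a (n + 1) - a n := by
  refine Summable.of_norm_bounded (hp_sum.add ha) fun n ↦ ?_
  have hpn := hp n
  calc ‖a (n + 1) - a n‖ = p n * ‖a (n + 1) - a n‖ / p n := by field_simp
    _ ≤ (p n ^ 2 + ‖a (n + 1) - a n‖ ^ 2) / p n := by
      gcongr
      nlinarith [sq_nonneg (p n - ‖a (n + 1) - a n‖)]
    _ = p n + ‖a (n + 1) - a n‖ ^ 2 / p n := by field_simp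

variable [InnerProductSpace ℝ E] [CompleteSpace E]

theorem hasSum_mul_norm_singleTermEstimator_sub_sq (hp : ∀ n, 0 < p n) (hp_sum : HasSum p 1)
    (ha : Tendsto a atTop (𝓝 m)) (ha_sum : Summable fun n ↦ ‖a (n + 1) - a n‖ ^ 2 / p n) (g : E) :
    HasSum (fun n ↦ p n * ‖singleTermEstimator a p n - g‖ ^ 2)
      (‖m - g‖ ^ 2 - ‖m - a 0‖ ^ 2 + ∑' n, ‖a (n + 1) - a n‖ ^ 2 / p n) := by
  have h_increments : HasSum (fun n ↦ a (n + 1) - a n) (m - a 0) := by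
    refine (summable_sub_of_summable_norm_sq_div hp hp_sum.summable ha_sum).hasSum_iff_tendsto_nat.2
      ?_
    simpa only [Finset.sum_range_sub] using ha.sub_const (a 0)
  have h_expand (n : ℕ) : p n * ‖singleTermEstimator a p n - g‖ ^ 2
      = ‖a 0 - g‖ ^ 2 * p n + 2 * ⟪a 0 - g, a (n + 1) - a n⟫ + ‖a (n + 1) - a n‖ ^ 2 / p n := by
    have hpn := (hp n).ne'
    rw [singleTermEstimator, add_sub_right_comm, norm_add_sq_real, inner_smul_right, norm_smul,
      mul_pow, Real.norm_eq_abs, sq_abs]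
    field_simp
  have h_limit : ‖m - g‖ ^ 2 - ‖m - a 0‖ ^ 2 = ‖a 0 - g‖ ^ 2 * 1 + 2 * ⟪a 0 - g, m - a 0⟫ := by
    rw [← sub_add_sub_cancel' (a 0) g m, norm_add_sq_real]
    ring
  simp only [h_expand, h_limit]
  exact ((hp_sum.mul_left _).add ((h_increments.mapL (innerSL ℝ (a 0 - g))).mul_left 2)).add
    ha_sum.hasSum

theorem tsum_ofReal_mul_norm_singleTermEstimator_sub_sq_le (hp : ∀ n, 0 < p n)
    (hp_sum : HasSum p 1) (ha : Tendsto a atTop (𝓝 m)) (g : E) :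
    ∑' n, ENNReal.ofReal (p n) * ENNReal.ofReal (‖singleTermEstimator a p n - g‖ ^ 2) ≤
      ENNReal.ofReal (‖m - g‖ ^ 2) + ∑' n, ENNReal.ofReal (‖a (n + 1) - a n‖ ^ 2 / p n) := by
  have h_nonneg (n : ℕ) : 0 ≤ ‖a (n + 1) - a n‖ ^ 2 / p n := div_nonneg (sq_nonneg _) (hp n).le
  by_cases h_top : ∑' n, ENNReal.ofReal (‖a (n + 1) - a n‖ ^ 2 / p n) = ∞
  · simp only [h_top, add_top, le_top]
  have ha_sum : Summable fun n ↦ ‖a (n + 1) - a n‖ ^ 2 / p n := by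
    simpa only [ENNReal.toReal_ofReal (h_nonneg _)] using ENNReal.summable_toReal h_top
  have h_mse := hasSum_mul_norm_singleTermEstimator_sub_sq hp hp_sum ha ha_sum g
  simp only [← ENNReal.ofReal_mul (hp _).le]
  rw [← ENNReal.ofReal_tsum_of_nonneg (fun n ↦ mul_nonneg (hp n).le (sq_nonneg _)) h_mse.summable,
    ← ENNReal.ofReal_tsum_of_nonneg h_nonneg ha_sum, h_mse.tsum_eq,
    ← ENNReal.ofReal_add (sq_nonneg _) (tsum_nonneg h_nonneg)]
  gcongr
  exact sub_le_self _ (sq_nonneg _)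

end SingleTermEstimator

section Isotropic

theorem ae_norm_sq_eq_of_measure_sphere {E : Type*} [NormedAddCommGroup E] [MeasurableSpace E]
    [OpensMeasurableSpace E] {σ : Measure E} [IsProbabilityMeasure σ] {r : ℝ} (hr : 0 ≤ r)
    (hσ : σ (Metric.sphere 0 √r) = 1) : ∀ᵐ v ∂σ, ‖v‖ ^ 2 = r := by
  filter_upwards [(prob_compl_eq_zero_iff Metric.isClosed_sphere.measurableSet).2 hσ] with v hv
  rw [mem_sphere_zero_iff_norm.1 hv, Real.sq_sqrt hr]

variable {E : Type*} [NormedAddCommGroup E] [InnerProductSpace ℝ E] [MeasurableSpace E]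
  {σ : Measure E}

/-- A measure is isotropic if its second-moment form is the inner product of the space, as for a
standard Gaussian or for the uniform probability on the sphere of radius `√d` in `ℝ^d`. The
integrability of `⟪g, ·⟫ ^ 2` is implied, since a divergent integral would evaluate to `0`. -/
def IsIsotropic (σ : Measure E) : Prop :=
  ∀ g : E, ∫ v, ⟪g, v⟫ ^ 2 ∂σ = ‖g‖ ^ 2

theorem IsIsotropic.integrable_inner_sq (hσ : IsIsotropic σ) (g : E) :
    Integrable (fun v ↦ ⟪g, v⟫ ^ 2) σ := by
  rcases eq_or_ne g 0 with rfl | hg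
  · simp
  · refine .of_integral_ne_zero ?_
    rw [hσ g]
    positivity

theorem IsIsotropic.lintegral_norm_inner_smul_sub_sq [IsProbabilityMeasure σ] {d : ℝ}
    (hσ : IsIsotropic σ) (hd : ∀ᵐ v ∂σ, ‖v‖ ^ 2 = d) (g : E) :
    ∫⁻ v, ENNReal.ofReal (‖⟪g, v⟫ • v - g‖ ^ 2) ∂σ = ENNReal.ofReal ((d - 1) * ‖g‖ ^ 2) := by
  have h_expand : ∀ᵐ v ∂σ, ‖⟪g, v⟫ • v - g‖ ^ 2 = (d - 2) * ⟪g, v⟫ ^ 2 + ‖g‖ ^ 2 := by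
    filter_upwards [hd] with v hv
    rw [norm_sub_sq_real, norm_smul, mul_pow, hv, real_inner_smul_left, real_inner_comm,
      Real.norm_eq_abs, sq_abs]
    ring
  have h_int : Integrable (fun v ↦ (d - 2) * ⟪g, v⟫ ^ 2) σ := (hσ.integrable_inner_sq g).const_mul _
  rw [← ofReal_integral_eq_lintegral_ofReal
      ((integrable_congr h_expand).2 (h_int.add (integrable_const _)))
      (.of_forall fun v ↦ sq_nonneg _),
    integral_congr_ae h_expand, integral_add h_int (integrable_const _), integral_const_mul, hσ g,
    integral_const, probReal_univ, one_smul]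
  ring_nf

variable [FiniteDimensional ℝ E] [BorelSpace E]

theorem finrank_mul_integral_inner_sq (hσ : Integrable (fun v ↦ ‖v‖ ^ 2) σ)
    (h_inv : ∀ R : E ≃ₗᵢ[ℝ] E, σ.map R = σ) (g : E) :
    Module.finrank ℝ E * ∫ v, ⟪g, v⟫ ^ 2 ∂σ = ‖g‖ ^ 2 * ∫ v, ‖v‖ ^ 2 ∂σ := by
  have h_int (u : E) : Integrable (fun v ↦ ⟪u, v⟫ ^ 2) σ := by
    refine (hσ.const_mul (‖u‖ ^ 2)).mono' (Continuous.aestronglyMeasurable (by fun_prop))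
      (.of_forall fun v ↦ ?_)
    rw [norm_pow, ← mul_pow]
    gcongr
    exact norm_inner_le_norm u v
  -- Vectors of equal norm are exchanged by a reflection.
  have h_rot (u w : E) (huw : ‖u‖ = ‖w‖) : ∫ v, ⟪u, v⟫ ^ 2 ∂σ = ∫ v, ⟪w, v⟫ ^ 2 ∂σ := by
    let R := (ℝ ∙ (u - w))ᗮ.reflection
    have hR : MeasurePreserving R σ σ := ⟨R.continuous.measurable, h_inv R⟩
    have h_swap : R u = w := Submodule.reflection_sub huw
    calc ∫ v, ⟪u, v⟫ ^ 2 ∂σ = ∫ v, ⟪w, R v⟫ ^ 2 ∂σ := by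
          simp only [← h_swap, LinearIsometryEquiv.inner_map_map]
      _ = ∫ v, ⟪w, v⟫ ^ 2 ∂σ :=
          hR.integral_comp R.toHomeomorph.measurableEmbedding fun v ↦ ⟪w, v⟫ ^ 2
  let b := stdOrthonormalBasis ℝ E
  have h_basis (i) : ∫ v, ⟪‖g‖ • b i, v⟫ ^ 2 ∂σ = ∫ v, ⟪g, v⟫ ^ 2 ∂σ :=
    h_rot _ _ (by simp [norm_smul])
  calc (Module.finrank ℝ E : ℝ) * ∫ v, ⟪g, v⟫ ^ 2 ∂σ
      = ∑ i, ∫ v, ⟪‖g‖ • b i, v⟫ ^ 2 ∂σ := by simp [h_basis]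
    _ = ‖g‖ ^ 2 * ∫ v, ∑ i, ⟪b i, v⟫ ^ 2 ∂σ := by
        simp only [real_inner_smul_left, mul_pow, integral_const_mul, ← Finset.mul_sum,
          integral_finsetSum _ fun i _ ↦ h_int (b i)]
    _ = ‖g‖ ^ 2 * ∫ v, ‖v‖ ^ 2 ∂σ := by simp only [b.sum_sq_inner_right]

theorem isIsotropic_of_map_linearIsometryEquiv [IsProbabilityMeasure σ]
    (h_norm : ∀ᵐ v ∂σ, ‖v‖ ^ 2 = (Module.finrank ℝ E : ℝ))
    (h_inv : ∀ R : E ≃ₗᵢ[ℝ] E, σ.map R = σ) : IsIsotropic σ := by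
  intro g
  rcases subsingleton_or_nontrivial E with _ | _
  · simp [Subsingleton.elim g 0]
  have h_moment := finrank_mul_integral_inner_sq
    ((integrable_congr h_norm).2 (integrable_const _)) h_inv g
  rw [integral_congr_ae h_norm, integral_const, probReal_univ, one_smul, mul_comm] at h_moment
  exact mul_right_cancel₀ (Nat.cast_ne_zero.2 Module.finrank_pos.ne') h_moment

end Isotropic

section P4Estimator

variable {E : Type*} [NormedAddCommGroup E] [InnerProductSpace ℝ E] {f : E → ℝ}
  {μ p : ℕ → ℝ}

/-- The scalar `P₄(n, v)` in the estimator `P₄(n, v) • v` of `∇f(x)`: the single-term estimator of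
the directional derivative along `v`, with steps `μ` and weights `p`, both indexed from `0`. -/
noncomputable def P4Estimator (f : E → ℝ) (x : E) (μ p : ℕ → ℝ) (n : ℕ) (v : E) : ℝ :=
  singleTermEstimator (fun k ↦ diffQuotient f x (μ k) v) p n

theorem continuous_P4Estimator (hf : Continuous f) (x : E) (μ p : ℕ → ℝ) (n : ℕ) :
    Continuous (P4Estimator f x μ p n) := by
  have h_quotient (k : ℕ) : Continuous (diffQuotient f x (μ k)) := continuous_diffQuotient hf x _
  unfold P4Estimator singleTermEstimator
  fun_prop

variable [CompleteSpace E] {L : ℝ≥0}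

theorem tsum_ofReal_mul_norm_P4Estimator_smul_sub_sq_le (hf : Differentiable ℝ f)
    (hL : LipschitzWith L (∇ f)) (hμ_ne : ∀ n, μ n ≠ 0) (hμ : Tendsto μ atTop (𝓝 0))
    (hp : ∀ n, 0 < p n) (hp_sum : HasSum p 1) (x v : E) :
    ∑' n, ENNReal.ofReal (p n) * ENNReal.ofReal (‖P4Estimator f x μ p n v • v - ∇ f x‖ ^ 2) ≤
      ENNReal.ofReal (‖⟪∇ f x, v⟫ • v - ∇ f x‖ ^ 2) +
        ENNReal.ofReal (L ^ 2 / 4 * ‖v‖ ^ 6) *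
          ∑' n, ENNReal.ofReal ((μ n - μ (n + 1)) ^ 2 / p n) := by
  have h_lim : Tendsto (fun n ↦ diffQuotient f x (μ n) v • v) atTop (𝓝 (⟪∇ f x, v⟫ • v)) :=
    ((tendsto_diffQuotient hf x v).comp
      (tendsto_nhdsWithin_iff.2 ⟨hμ, .of_forall hμ_ne⟩)).smul_const v
  have h_increment (n : ℕ) :
      ‖diffQuotient f x (μ (n + 1)) v • v - diffQuotient f x (μ n) v • v‖ ^ 2 / p n ≤
        L ^ 2 / 4 * ‖v‖ ^ 6 * ((μ n - μ (n + 1)) ^ 2 / p n) := by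
    have hpn := (hp n).le
    calc ‖diffQuotient f x (μ (n + 1)) v • v - diffQuotient f x (μ n) v • v‖ ^ 2 / p n
        = (|diffQuotient f x (μ (n + 1)) v - diffQuotient f x (μ n) v| * ‖v‖) ^ 2 / p n := by
          rw [← sub_smul, norm_smul, Real.norm_eq_abs]
      _ ≤ (L * ‖v‖ ^ 2 / 2 * |μ (n + 1) - μ n| * ‖v‖) ^ 2 / p n := by
          gcongr
          exact abs_diffQuotient_sub_le hf hL x v (hμ_ne _) (hμ_ne _)
      _ = L ^ 2 / 4 * ‖v‖ ^ 6 * ((μ n - μ (n + 1)) ^ 2 / p n) := by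
          rw [abs_sub_comm, ← sq_abs (μ n - μ (n + 1))]
          ring
  simp only [P4Estimator, singleTermEstimator_smul_const]
  refine (tsum_ofReal_mul_norm_singleTermEstimator_sub_sq_le hp hp_sum h_lim _).trans ?_
  rw [← ENNReal.tsum_mul_left]
  gcongr with n
  rw [← ENNReal.ofReal_mul (by positivity)]
  exact ENNReal.ofReal_le_ofReal (h_increment n)

variable [MeasurableSpace E] [BorelSpace E] {σ : Measure E}

theorem P4_estimator_variance_bound_general [IsProbabilityMeasure σ] {d : ℝ}
    (hf : Differentiable ℝ f) (hL : LipschitzWith L (∇ f)) (x : E)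
    (hμ_ne : ∀ n, μ n ≠ 0) (hμ : Tendsto μ atTop (𝓝 0))
    (hp : ∀ n, 0 < p n) (hp_sum : HasSum p 1)
    (h_norm : ∀ᵐ v ∂σ, ‖v‖ ^ 2 = d) (hσ : IsIsotropic σ) :
    ∑' n, ENNReal.ofReal (p n) *
        ∫⁻ v, ENNReal.ofReal (‖P4Estimator f x μ p n v • v - ∇ f x‖ ^ 2) ∂σ ≤
      ENNReal.ofReal ((d - 1) * ‖∇ f x‖ ^ 2) +
        ENNReal.ofReal (L ^ 2 * d ^ 3 / 4) *
          ∑' n, ENNReal.ofReal ((μ n - μ (n + 1)) ^ 2 / p n) := by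
  have h_meas (n : ℕ) :
      Measurable fun v ↦ ENNReal.ofReal (‖P4Estimator f x μ p n v • v - ∇ f x‖ ^ 2) := by
    have h_cont := continuous_P4Estimator hf.continuous x μ p n
    exact (Continuous.measurable (by fun_prop)).ennreal_ofReal
  simp only [← lintegral_const_mul _ (h_meas _)]
  rw [← lintegral_tsum fun n ↦ ((h_meas n).const_mul _).aemeasurable]
  calc ∫⁻ v, ∑' n, ENNReal.ofReal (p n) *
          ENNReal.ofReal (‖P4Estimator f x μ p n v • v - ∇ f x‖ ^ 2) ∂σ
      ≤ ∫⁻ v, ENNReal.ofReal (‖⟪∇ f x, v⟫ • v - ∇ f x‖ ^ 2) +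
          ENNReal.ofReal (L ^ 2 * d ^ 3 / 4) *
            ∑' n, ENNReal.ofReal ((μ n - μ (n + 1)) ^ 2 / p n) ∂σ := by
        refine lintegral_mono_ae ?_
        filter_upwards [h_norm] with v hv
        have h_coeff : L ^ 2 * d ^ 3 / 4 = L ^ 2 / 4 * ‖v‖ ^ 6 := by rw [← hv]; ring
        rw [h_coeff]
        exact tsum_ofReal_mul_norm_P4Estimator_smul_sub_sq_le hf hL hμ_ne hμ hp hp_sum x v
    _ = _ := by
        rw [lintegral_add_right _ measurable_const, hσ.lintegral_norm_inner_smul_sub_sq h_norm,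
          lintegral_const, measure_univ, mul_one]

end P4Estimator

/-- Variance bound for the `P₄`-estimator. For `f` twice
continuously differentiable with `L`-Lipschitz gradient, positive decreasing summable
stepsizes `(μ n)`, a PMF `(p n)` (index `0` corresponds to the paper's `n = 1`) and
`σ` the uniform probability measure on the sphere of radius `√d`, writing
`Δ n v := (f (x + μ n • v) - f x)/μ n`,
`P₄ n v := Δ 1 v + (1/p n)(Δ (n+1) v - Δ n v)`, `μ := μ 1` and
`ϱ := ∑ (μ n - μ (n+1))²/p n`, one has, with all sums and integrals in `[0, ∞]`:
`∑ p n ∫ ‖P₄ n v • v - ∇f x‖² dσ(v) ≤ (d-1)‖∇f x‖² + (3L²/4)d³μ² + (L²d³/2)ϱ`. -/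
theorem P4_estimator_variance_bound
    (d : ℕ) (hd : 1 ≤ d) (f : EuclideanSpace ℝ (Fin d) → ℝ) (L : ℝ)
    (hf : ContDiff ℝ 2 f)
    (hlip : ∀ x y : EuclideanSpace ℝ (Fin d),
      ‖gradient f x - gradient f y‖ ≤ L * ‖x - y‖)
    (x : EuclideanSpace ℝ (Fin d))
    (μ : ℕ → ℝ) (hμpos : ∀ n, 0 < μ n) (hμdec : ∀ n, μ (n + 1) ≤ μ n)
    (hμsum : Summable μ)
    (p : ℕ → ℝ) (hppos : ∀ n, 0 < p n) (hpsum : ∑' n, p n = 1)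
    (σ : Measure (EuclideanSpace ℝ (Fin d))) [IsProbabilityMeasure σ]
    (hsupp : σ (Metric.sphere (0 : EuclideanSpace ℝ (Fin d)) (Real.sqrt d)) = 1)
    (hinv : ∀ R : EuclideanSpace ℝ (Fin d) ≃ₗᵢ[ℝ] EuclideanSpace ℝ (Fin d),
      Measure.map R σ = σ)
    (Δ : ℕ → EuclideanSpace ℝ (Fin d) → ℝ)
    (hΔ : ∀ n v, Δ n v = (f (x + μ n • v) - f x) / μ n)
    (P₄ : ℕ → EuclideanSpace ℝ (Fin d) → ℝ)
    (hP₄ : ∀ n v, P₄ n v = Δ 0 v + (1 / p n) * (Δ (n + 1) v - Δ n v))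
    (ϱ : ℝ≥0∞) (hϱ : ϱ = ∑' n, ENNReal.ofReal ((μ n - μ (n + 1)) ^ 2 / p n)) :
    ∑' n, ENNReal.ofReal (p n) *
        ∫⁻ v, ENNReal.ofReal (‖P₄ n v • v - gradient f x‖ ^ 2) ∂σ ≤
      ENNReal.ofReal (((d : ℝ) - 1) * ‖gradient f x‖ ^ 2
          + (3 * L ^ 2 / 4) * (d : ℝ) ^ 3 * μ 0 ^ 2)
        + ENNReal.ofReal (L ^ 2 * (d : ℝ) ^ 3 / 2) * ϱ := by
  have h_norm : ∀ᵐ v ∂σ, ‖v‖ ^ 2 = (d : ℝ) := ae_norm_sq_eq_of_measure_sphere d.cast_nonneg hsupp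
  obtain rfl : P₄ = P4Estimator f x μ p := by
    ext n v
    simp only [hP₄, hΔ, P4Estimator, singleTermEstimator, diffQuotient, smul_eq_mul]
  have h_sq : (L.toNNReal : ℝ) ^ 2 ≤ L ^ 2 := by
    rw [Real.coe_toNNReal', ← sq_abs L]
    gcongr
    exact max_le (le_abs_self L) (abs_nonneg L)
  rw [hϱ]
  refine (P4_estimator_variance_bound_general (hf.differentiable two_ne_zero)
    (LipschitzWith.of_dist_le' (by simpa only [dist_eq_norm] using hlip)) x (fun n ↦ (hμpos n).ne')
    hμsum.tendsto_atTop_zero hppos (hasSum_of_tsum_eq one_ne_zero hpsum) h_norm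
    (isIsotropic_of_map_linearIsometryEquiv (by simpa using h_norm) hinv)).trans ?_
  gcongr
  · exact le_add_of_nonneg_right (by positivity)
  · linarith
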